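/- (Algebraic core of Theorem 8, the closed formula for Σ^{i,1}(r).) Let i ≥ 1, h ≥ 1 and d = ih − i + 1. In ℤ[x_1,…,x_i,y_1,…,y_h], the homogeneous component of degree d of the polynomial ∏_{k=1}^{i} ∏_{l=1}^{h} (1 + y_l − x_k) · ∑_{r=0}^{d} (−1)^r h_r(x_1,…,x_i) equals ∑_{(ν,μ)∈I} (−1)^{|μ|} · F_{ν/μ}(i) · s_μ(x_1,…,x_i) · s_{∁ν~}(y_1,…,y_h), where I = { (ν,μ) : ν a partition with ν_1 ≤ h and l(ν) ≤ i, μ a partition with l(μ) ≤ i, and |ν| − |μ| = i − 1 }, and ∁ν~ denotes the complement of ν~ in the block (i^h), i.e. (∁ν~)_m = i − (ν~)_{h+1−m} for 1 ≤ m ≤ h. In particular the coefficients F_{ν/μ}(i) do not depend on h. -/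

import Mathlib

/-!
STATEMENT 11 (algebraic core of Theorem 8, the closed formula for `Σ^{i,1}(r)`):
with `d = ih − i + 1`, the degree-`d` homogeneous component of
`∏_{k,l} (1 + y_l − x_k) · ∑_{r=0}^{d} (−1)^r h_r(x)` in `ℤ[x_1,…,x_i,y_1,…,y_h]`
equals `∑_{(ν,μ)∈I} (−1)^{|μ|} · F_{ν/μ}(i) · s_μ(x) · s_{∁ν~}(y)`,
where `I = {(ν,μ) : ν_1 ≤ h, l(ν) ≤ i, l(μ) ≤ i, |ν| − |μ| = i − 1}` and `∁ν~` is the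
complement of `ν~` in the block `(i^h)`.  Partitions are encoded 0-based; `μ` is
parametrized by its first `i` parts, with parts ≤ `ih` (any `μ` occurring has
`μ_1 ≤ |μ| = |ν| − (i−1) ≤ ih`); the Schur polynomials are characterized by the
bialternant formula.
-/

open Finset MvPolynomial

/-- The conjugate partition, 0-based: `conjP lam m = (λ~)_{m+1} = #{k : λ_k ≥ m+1}`. -/
noncomputable def conjP (lam : ℕ → ℕ) (m : ℕ) : ℕ := Nat.card {k : ℕ // m + 1 ≤ lam k}

/-- Extension of a bounded tuple to a function `ℕ → ℕ` (zero beyond the box). -/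
def extF {n : ℕ} {m : Fin n → ℕ} (f : (k : Fin n) → Fin (m k + 1)) : ℕ → ℕ :=
  fun k => if h : k < n then (f ⟨k, h⟩ : ℕ) else 0

/-- `Ĉ(a,b) = ∑_{j=0}^{b} C(a,j)`. -/
def Chat (a b : ℕ) : ℤ := ∑ j ∈ Finset.range (b + 1), (a.choose j : ℤ)

/-- `F_{λ/μ}(n) = det[ Ĉ(λ_k + n − k, μ_l + n − l) ]_{1≤k,l≤n}` (indices written 0-based). -/
def Fdet (n : ℕ) (lam mu : ℕ → ℕ) : ℤ :=
  (Matrix.of fun k l : Fin n =>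
    Chat (lam k + (n - 1 - (k : ℕ))) (mu l + (n - 1 - (l : ℕ)))).det

/-- The complete homogeneous symmetric polynomial `h_a(x_1,…,x_i)` in the x-variables. -/
noncomputable def hsymX (i h a : ℕ) : MvPolynomial (Fin i ⊕ Fin h) ℤ :=
  ∑ f ∈ Finset.Nat.antidiagonalTuple i a, ∏ k, X (Sum.inl k) ^ f k

/-- The complement `∁ν~` of `ν~` in the block `(i^h)`:
`(∁ν~)_m = i − (ν~)_{h+1−m}` for `1 ≤ m ≤ h` (written 0-based). -/
noncomputable def complConj (i h : ℕ) (nu : ℕ → ℕ) : ℕ → ℕ :=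
  fun m => if m < h then i - conjP nu (h - 1 - m) else 0


def Del {R : Type*} [CommRing R] {n : ℕ} (t : Fin n → R) : R :=
  ∏ q ∈ Finset.univ.filter (fun q : Fin n × Fin n => q.1 < q.2), (t q.1 - t q.2)

lemma Del_eq {R : Type*} [CommRing R] {n : ℕ} (t : Fin n → R) :
    Del t = ∏ a, ∏ b, if a < b then t a - t b else 1 := by
  rw [Del, Finset.prod_filter, Fintype.prod_prod_type]

lemma det_Del {R : Type*} [CommRing R] {n : ℕ} (t : Fin n → R) :
    (Matrix.of fun a b : Fin n => t a ^ (n - 1 - (b : ℕ))).det = Del t := by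
  have h := Matrix.det_vandermonde (fun a : Fin n => t (Fin.rev a))
  have h2 : (Matrix.of fun a b : Fin n => t a ^ (n - 1 - (b : ℕ))).det
      = (Matrix.vandermonde (fun a : Fin n => t (Fin.rev a))).det := by
    rw [← Matrix.det_submatrix_equiv_self (Fin.revPerm (n := n))]
    congr 1
    ext a b
    simp only [Matrix.submatrix_apply, Matrix.of_apply, Fin.revPerm_apply, Matrix.vandermonde_apply]
    congr 1
    rw [Fin.val_rev]; omega
  have h3 : ∀ a : Fin n, ∏ b ∈ Finset.Ioi a, (t (Fin.rev b) - t (Fin.rev a))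
      = ∏ b, if a < b then t (Fin.rev b) - t (Fin.rev a) else 1 := by
    intro a
    rw [← Finset.prod_filter, Finset.filter_lt_eq_Ioi]
  rw [h2, h, Del_eq, Finset.prod_congr rfl (fun a _ => h3 a), Finset.prod_comm]
  rw [← Equiv.prod_comp (Fin.revPerm (n := n))]
  refine Finset.prod_congr rfl fun a _ => ?_
  rw [← Equiv.prod_comp (Fin.revPerm (n := n))]
  refine Finset.prod_congr rfl fun b _ => ?_
  simp only [Fin.revPerm_apply, Fin.rev_rev, Fin.rev_lt_rev]

lemma det_sum_Del {R : Type*} [CommRing R] {i h : ℕ} (t : Fin i ⊕ Fin h → R) :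
    (Matrix.of fun r s : Fin i ⊕ Fin h =>
      t r ^ (Sum.elim (fun k : Fin i => h + (i - 1 - (k : ℕ))) (fun m : Fin h => h - 1 - (m : ℕ)) s)).det
    = Del (fun k => t (Sum.inl k)) * Del (fun k => t (Sum.inr k))
      * ∏ k : Fin i, ∏ m : Fin h, (t (Sum.inl k) - t (Sum.inr m)) := by
  rw [← Matrix.det_submatrix_equiv_self (finSumFinEquiv (m := i) (n := h)).symm]
  have := det_Del (fun a : Fin (i + h) => t (finSumFinEquiv.symm a))
  have h2 : (Matrix.of fun a b : Fin (i + h) =>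
      t (finSumFinEquiv.symm a) ^ (i + h - 1 - (b : ℕ))) =
      ((Matrix.of fun r s : Fin i ⊕ Fin h =>
      t r ^ (Sum.elim (fun k : Fin i => h + (i - 1 - (k : ℕ))) (fun m : Fin h => h - 1 - (m : ℕ)) s)).submatrix
       finSumFinEquiv.symm finSumFinEquiv.symm) := by
    ext a b
    simp only [Matrix.submatrix_apply, Matrix.of_apply]
    congr 1
    obtain ⟨s, rfl⟩ := finSumFinEquiv.surjective b
    cases s with
    | inl k => simp; omega
    | inr k => simp; omega
  rw [← h2, this, Del_eq, Del_eq, Del_eq, Fin.prod_univ_add]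
  simp only [Fin.prod_univ_add, finSumFinEquiv_symm_apply_castAdd, finSumFinEquiv_symm_apply_natAdd]
  have e1 : ∀ (k : Fin i) (m : Fin h), Fin.castAdd h k < Fin.natAdd i m := by
    intro k m; rw [Fin.lt_def, Fin.val_castAdd, Fin.val_natAdd]; omega
  have e2 : ∀ (k : Fin i) (m : Fin h), ¬ (Fin.natAdd i m < Fin.castAdd h k) := by
    intro k m; rw [Fin.lt_def, Fin.val_castAdd, Fin.val_natAdd]; omega
  have e3 : ∀ (k m : Fin i), Fin.castAdd h k < Fin.castAdd h m ↔ k < m := by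
    intro k m; exact Iff.rfl
  have e4 : ∀ (k m : Fin h), Fin.natAdd i k < Fin.natAdd i m ↔ k < m := by
    intro k m; simp
  simp only [e1, e2, e3, e4, if_true, if_false, Finset.prod_const_one, one_mul,
    Finset.prod_mul_distrib]
  ring

/-- expansion of an alternating map -/
lemma alt_expand {R : Type*} [CommRing R] {i N : ℕ} (f : (Fin N → R) [⋀^Fin i]→ₗ[R] R)
    (v : Fin i → Fin N → R) :
    f v = ∑ c ∈ Finset.univ.filter (fun c : Fin i → Fin N => StrictAnti c),
      (Matrix.of fun a b => v a (c b)).det * f (fun b => Pi.single (c b) 1) := by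
  classical
  have h1 : f v = ∑ c : Fin i → Fin N, (∏ a, v a (c a)) * f (fun b => Pi.single (c b) 1) := by
    have : v = fun a => ∑ j : Fin N, v a j • (Pi.single j (1 : R) : Fin N → R) := by
      ext a j
      simp [Finset.sum_apply, Pi.single_apply]
    conv_lhs => rw [this]
    have := f.toMultilinearMap.map_sum (fun a (j : Fin N) => v a j • (Pi.single j (1 : R) : Fin N → R))
    simp only [AlternatingMap.coe_multilinearMap] at this
    rw [this]
    refine Finset.sum_congr rfl fun c _ => ?_
    have := f.toMultilinearMap.map_smul_univ (fun a => v a (c a)) (fun a => (Pi.single (c a) (1 : R) : Fin N → R))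
    simpa using this
  have h2 : f v = ∑ c ∈ Finset.univ.filter (fun c : Fin i → Fin N => Function.Injective c),
      (∏ a, v a (c a)) * f (fun b => Pi.single (c b) 1) := by
    rw [h1]
    symm
    apply Finset.sum_subset (Finset.filter_subset _ _)
    intro c _ hc
    have hc : ¬ Function.Injective c := by simpa using hc
    rw [f.map_eq_zero_of_not_injective, mul_zero]
    intro hinj
    apply hc
    intro a b hab
    apply hinj
    simp [hab]
  rw [h2]
  symm
  calc _ = ∑ c ∈ Finset.univ.filter (fun c : Fin i → Fin N => StrictAnti c), ∑ σ : Equiv.Perm (Fin i),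
        (∏ a, v a (c (σ a))) * f (fun b => Pi.single (c (σ b)) 1) := by
        refine Finset.sum_congr rfl fun c _ => ?_
        rw [← Matrix.det_transpose, Matrix.det_apply, Finset.sum_mul]
        refine Finset.sum_congr rfl fun σ _ => ?_
        have := f.map_perm (fun b => (Pi.single (c b) 1 : Fin N → R)) σ
        have e : (fun b => (Pi.single (c (σ b)) 1 : Fin N → R)) = (fun b => (Pi.single (c b) 1 : Fin N → R)) ∘ σ := rfl
        rw [e, this]
        simp [Matrix.transpose_apply, Units.smul_def]
        ring
    _ = _ := by
        rw [← Finset.sum_product']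
        refine Finset.sum_bij (fun p _ => p.1 ∘ p.2) ?_ ?_ ?_ ?_
        · rintro ⟨c, σ⟩ hp
          simp only [Finset.mem_product, Finset.mem_filter, Finset.mem_univ, true_and, and_true] at hp ⊢
          exact hp.injective.comp σ.injective
        · rintro ⟨c, σ⟩ hp ⟨c', σ'⟩ hp' heq
          simp only [Finset.mem_product, Finset.mem_filter, Finset.mem_univ, true_and, and_true] at hp hp' heq
          have hr : Set.range (c ∘ Fin.rev) = Set.range (c' ∘ Fin.rev) := by
            have e1 : Set.range (c ∘ Fin.rev) = Set.range (c ∘ σ) := by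
              rw [Function.Surjective.range_comp (Fin.rev_surjective), Function.Surjective.range_comp σ.surjective]
            have e2 : Set.range (c' ∘ Fin.rev) = Set.range (c' ∘ σ') := by
              rw [Function.Surjective.range_comp (Fin.rev_surjective), Function.Surjective.range_comp σ'.surjective]
            rw [e1, e2, heq]
          have hm : ∀ c : Fin i → Fin N, StrictAnti c → StrictMono (c ∘ Fin.rev) := by
            intro c hc a b hab
            exact hc (Fin.rev_lt_rev.2 hab)
          have := ((hm c hp).range_inj (hm c' hp')).1 hr
          have hcc : c = c' := by
            funext a
            have := congrFun this (Fin.rev a)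
            simpa using this
          subst hcc
          have : σ = σ' := by
            ext a
            exact congrArg _ (hp.injective (congrFun heq a))
          rw [this]
        · intro c hc
          have hc : Function.Injective c := by simpa using hc
          have hs := Tuple.monotone_sort c
          have hs' : StrictMono (c ∘ Tuple.sort c) :=
            hs.strictMono_of_injective (hc.comp (Tuple.sort c).injective)
          refine ⟨(c ∘ (Fin.revPerm.trans (Tuple.sort c)), (Fin.revPerm.trans (Tuple.sort c)).symm), ?_, ?_⟩
          · simp only [Finset.mem_product, Finset.mem_filter, Finset.mem_univ, true_and, and_true]
            intro a b hab
            exact hs' (Fin.rev_lt_rev.2 hab)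
          · funext a
            simp
        · rintro ⟨c, σ⟩ _
          rfl

lemma strictAnti_reparam {R : Type*} [AddCommMonoid R] (i M : ℕ) (g : (Fin i → ℕ) → R) :
    ∑ c ∈ Finset.univ.filter (fun c : Fin i → Fin (M + i) => StrictAnti c), g (fun b => c b)
    = ∑ mu ∈ (Fintype.piFinset (fun _ : Fin i => Finset.range (M + 1))).filter (fun mu => Antitone mu),
        g (fun b => mu b + (i - 1 - (b : ℕ))) := by
  classical
  have key : ∀ c : Fin i → Fin (M + i), StrictAnti c →
      (∀ b : Fin i, i - 1 - (b : ℕ) ≤ c b) ∧ (∀ b : Fin i, (c b : ℕ) ≤ M + (i - 1 - b)) ∧ 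
      (∀ a b : Fin i, a ≤ b → (c b : ℕ) + (b - a : ℕ) ≤ c a) := by
    intro c hc
    have h0 : ∀ n : ℕ, ∀ a b : Fin i, (b : ℕ) = a + n → (c b : ℕ) + n ≤ c a := by
      intro n
      induction n with
      | zero => 
        intro a b hab
        have : a = b := Fin.ext (by omega)
        subst this; simp
      | succ n ih =>
        intro a b hab
        have h1 := ih a ⟨a + n, by omega⟩ rfl
        have h2 : (c b : ℕ) < c ⟨a + n, by omega⟩ := hc (show (⟨a + n, by omega⟩ : Fin i) < b by rw [Fin.lt_def]; simp; omega)
        omega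
    refine ⟨fun b => ?_, fun b => ?_, fun a b hab => ?_⟩
    · have hb := b.2
      have hb' : i - 1 < i := by omega
      have := h0 (i - 1 - b) b ⟨i - 1, hb'⟩ (by simp; omega)
      omega
    · have hb := b.2
      have hb' : 0 < i := by omega
      have := h0 b ⟨0, hb'⟩ b (by simp)
      have := (c ⟨0, hb'⟩).2
      omega
    · exact h0 _ a b (by have : (a : ℕ) ≤ b := hab; omega)
  refine Finset.sum_bij (fun c _ => fun b => (c b : ℕ) - (i - 1 - (b : ℕ))) ?_ ?_ ?_ ?_
  · intro c hc
    have hc : StrictAnti c := by simpa using hc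
    obtain ⟨k1, k2, k3⟩ := key c hc
    simp only [Finset.mem_filter, Fintype.mem_piFinset, Finset.mem_range]
    refine ⟨fun b => ?_, fun a b hab => ?_⟩
    · have := k2 b; omega
    · have := k3 a b hab
      have h1 := k1 a
      have h2 := k1 b
      have : (a : ℕ) ≤ b := hab
      have := b.2
      simp only
      omega
  · intro c hc c' hc' heq
    have hc : StrictAnti c := by simpa using hc
    have hc' : StrictAnti c' := by simpa using hc'
    funext b
    have := congrFun heq b
    have h1 := (key c hc).1 b
    have h2 := (key c' hc').1 b
    apply Fin.ext
    omega
  · intro mu hmu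
    simp only [Finset.mem_filter, Fintype.mem_piFinset, Finset.mem_range] at hmu
    obtain ⟨h1, h2⟩ := hmu
    refine ⟨fun b => ⟨mu b + (i - 1 - (b : ℕ)), by have := h1 b; omega⟩, ?_, ?_⟩
    · simp only [Finset.mem_filter, Finset.mem_univ, true_and]
      intro a b hab
      rw [Fin.lt_def] at hab ⊢
      have := h2 (show a ≤ b from hab.le)
      have := b.2
      simp only
      omega
    · funext b; simp
  · intro c hc
    have hc : StrictAnti c := by simpa using hc
    obtain ⟨k1, k2, k3⟩ := key c hc
    congr 1
    funext b
    have := k1 b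
    simp only
    omega

def ext0 {i : ℕ} (nu : Fin i → ℕ) : ℕ → ℕ := fun k => if h : k < i then nu ⟨k, h⟩ else 0

lemma ext0_coe {i : ℕ} (nu : Fin i → ℕ) (k : Fin i) : ext0 nu k = nu k := by
  simp [ext0]

lemma ext0_zero {i : ℕ} (nu : Fin i → ℕ) (k : ℕ) (hk : i ≤ k) : ext0 nu k = 0 := by
  simp [ext0, hk]

lemma ext0_antitone {i : ℕ} (nu : Fin i → ℕ) (hn : Antitone nu) : Antitone (ext0 nu) := by
  intro a b hab
  unfold ext0
  split_ifs with h1 h2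
  · exact hn (show (⟨a, h2⟩ : Fin i) ≤ ⟨b, h1⟩ from hab)
  · omega
  · omega
  · exact le_refl _

lemma conjP_ext0 {i : ℕ} (nu : Fin i → ℕ) (m : ℕ) :
    conjP (ext0 nu) m = (Finset.univ.filter (fun k : Fin i => m < nu k)).card := by
  rw [conjP, ← Fintype.card_subtype, ← Nat.card_eq_fintype_card]
  refine Nat.card_congr ⟨fun k => ⟨⟨k.1, ?_⟩, ?_⟩, fun k => ⟨k.1, ?_⟩, fun k => rfl, fun k => rfl⟩
  · by_contra hk
    have := k.2
    rw [ext0_zero nu k.1 (by omega)] at this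
    omega
  · have hk : k.1 < i := by
      by_contra hk
      have := k.2
      rw [ext0_zero nu k.1 (by omega)] at this
      omega
    have := k.2
    have e : ext0 nu k.1 = nu ⟨k.1, hk⟩ := by simp [ext0, hk]
    omega
  · have := k.2
    rw [ext0_coe]
    omega

lemma conjP_le {i : ℕ} (nu : Fin i → ℕ) (m : ℕ) : conjP (ext0 nu) m ≤ i := by
  rw [conjP_ext0]
  exact (Finset.card_le_univ _).trans (by simp)

lemma conjP_anti {i : ℕ} (nu : Fin i → ℕ) (m m' : ℕ) (h : m ≤ m') :
    conjP (ext0 nu) m' ≤ conjP (ext0 nu) m := by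
  rw [conjP_ext0, conjP_ext0]
  apply Finset.card_le_card
  intro k
  simp only [Finset.mem_filter, Finset.mem_univ, true_and]
  omega

lemma lt_conjP {i : ℕ} (nu : Fin i → ℕ) (hn : Antitone nu) (m : ℕ) (k : Fin i) :
    (k : ℕ) < conjP (ext0 nu) m ↔ m < nu k := by
  rw [conjP_ext0]
  constructor
  · intro h
    by_contra hk
    have : (Finset.univ.filter (fun k : Fin i => m < nu k)) ⊆ Finset.Iio k := by
      intro a
      simp only [Finset.mem_filter, Finset.mem_univ, true_and, Finset.mem_Iio]
      intro ha
      by_contra hka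
      have := hn (not_lt.1 hka)
      omega
    have := Finset.card_le_card this
    rw [Fin.card_Iio] at this
    omega
  · intro h
    have : Finset.Iic k ⊆ (Finset.univ.filter (fun k : Fin i => m < nu k)) := by
      intro a
      simp only [Finset.mem_filter, Finset.mem_univ, true_and, Finset.mem_Iic]
      intro ha
      have := hn ha
      omega
    have := Finset.card_le_card this
    rw [Fin.card_Iic] at this
    omega

lemma complConj_zero (i h : ℕ) (nu : ℕ → ℕ) (k : ℕ) (hk : h ≤ k) : complConj i h nu k = 0 := by
  simp [complConj, hk]

lemma complConj_antitone (i h : ℕ) (nu : Fin i → ℕ) :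
    Antitone (complConj i h (ext0 nu)) := by
  intro a b hab
  unfold complConj
  have := conjP_anti nu (h - 1 - b) (h - 1 - a) (by omega)
  split_ifs <;> omega

lemma sum_complConj (i h : ℕ) (nu : Fin i → ℕ) (hh : ∀ k, nu k ≤ h) :
    ∑ m : Fin h, complConj i h (ext0 nu) m + ∑ k, nu k = i * h := by
  have h1 : ∑ m : Fin h, complConj i h (ext0 nu) m
      = ∑ m : Fin h, (i - conjP (ext0 nu) m) := by
    rw [← Equiv.sum_comp (Fin.revPerm (n := h))]
    refine Finset.sum_congr rfl fun m _ => ?_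
    have := m.2
    rw [complConj, if_pos (by simp; omega)]
    congr 2
    rw [Fin.revPerm_apply, Fin.val_rev]
    omega
  have h2 : ∑ k, nu k = ∑ m : Fin h, conjP (ext0 nu) m := by
    simp only [conjP_ext0, Finset.card_filter]
    rw [Finset.sum_comm]
    refine Finset.sum_congr rfl fun k _ => ?_
    rw [← Finset.card_filter]
    have := Fin.card_filter_val_lt (n := h) (m := nu k)
    rw [this, min_eq_right (hh k)]
  rw [h1, h2, ← Finset.sum_add_distrib]
  rw [Finset.sum_congr rfl (fun (m : Fin h) _ => Nat.sub_add_cancel (conjP_le nu (m : ℕ)))]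
  simp [mul_comm]

/-- row exponents -/
noncomputable def wnu (i h : ℕ) (nu : Fin i → ℕ) : Fin i ⊕ Fin h → ℕ :=
  Sum.elim (fun k => nu k + (i - 1 - (k : ℕ))) (fun m => complConj i h (ext0 nu) m + (h - 1 - (m : ℕ)))

def w0 (i h : ℕ) : Fin i ⊕ Fin h → ℕ :=
  Sum.elim (fun k : Fin i => h + (i - 1 - (k : ℕ))) (fun m : Fin h => h - 1 - (m : ℕ))

lemma w0_inj (i h : ℕ) : Function.Injective (w0 i h) := by
  rintro (a | a) (b | b) hab <;> simp only [w0, Sum.elim_inl, Sum.elim_inr] at hab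
  · congr 1; apply Fin.ext; omega
  · omega
  · omega
  · congr 1; apply Fin.ext; omega

lemma w0_lt (i h : ℕ) (s) : w0 i h s < h + i := by
  rcases s with a | a <;> simp only [w0, Sum.elim_inl, Sum.elim_inr] <;> omega

lemma wnu_cmp (i h : ℕ) (nu : Fin i → ℕ) (hn : Antitone nu) (hh : ∀ k, nu k ≤ h) (k : Fin i) (m : Fin h) :
    (h - 1 - (m : ℕ) < nu k → wnu i h nu (Sum.inr m) < wnu i h nu (Sum.inl k)) ∧
    (¬ (h - 1 - (m : ℕ) < nu k) → wnu i h nu (Sum.inl k) < wnu i h nu (Sum.inr m)) := by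
  have := lt_conjP nu hn (h - 1 - m) k
  have h2 := conjP_le nu (h - 1 - m)
  simp only [wnu, Sum.elim_inl, Sum.elim_inr, complConj, if_pos m.2]
  constructor <;> intro h3
  · have := this.2 h3
    omega
  · have := mt this.1 h3
    omega

lemma wnu_inj (i h : ℕ) (nu : Fin i → ℕ) (hn : Antitone nu) (hh : ∀ k, nu k ≤ h) :
    Function.Injective (wnu i h nu) := by
  have hx : ∀ (k : Fin i) (m : Fin h), wnu i h nu (Sum.inl k) ≠ wnu i h nu (Sum.inr m) := by
    intro k m
    have := wnu_cmp i h nu hn hh k m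
    by_cases hc : h - 1 - (m : ℕ) < nu k
    · have := this.1 hc; omega
    · have := this.2 hc; omega
  rintro (a | a) (b | b) hab
  · simp only [wnu, Sum.elim_inl] at hab
    congr 1
    rcases lt_trichotomy a b with h1 | h1 | h1
    · have := hn h1.le
      have : (a : ℕ) < b := h1
      omega
    · exact h1
    · have := hn h1.le
      have : (b : ℕ) < a := h1
      omega
  · exact absurd hab (hx _ _)
  · exact absurd hab.symm (hx _ _)
  · simp only [wnu, Sum.elim_inr] at hab
    congr 1
    have hc := complConj_antitone i h nu
    rcases lt_trichotomy a b with h1 | h1 | h1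
    · have : (a : ℕ) < b := h1
      have := hc this.le
      omega
    · exact h1
    · have : (b : ℕ) < a := h1
      have := hc this.le
      omega

lemma wnu_lt (i h : ℕ) (nu : Fin i → ℕ) (hh : ∀ k, nu k ≤ h) (s) : wnu i h nu s < h + i := by
  rcases s with a | a <;> simp only [wnu, Sum.elim_inl, Sum.elim_inr]
  · have := hh a; omega
  · have := conjP_le nu (h - 1 - a)
    rw [complConj, if_pos a.2]
    omega

lemma exists_perm (i h : ℕ) (nu : Fin i → ℕ) (hn : Antitone nu) (hh : ∀ k, nu k ≤ h) :
    ∃ σ : Equiv.Perm (Fin i ⊕ Fin h), ∀ s, wnu i h nu s = w0 i h (σ s) := by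
  have b1 : Function.Bijective (fun s => (⟨w0 i h s, w0_lt i h s⟩ : Fin (h + i))) := by
    rw [Fintype.bijective_iff_injective_and_card]
    refine ⟨fun a b hab => w0_inj i h (by simpa using hab), by simp [add_comm]⟩
  have b2 : Function.Bijective (fun s => (⟨wnu i h nu s, wnu_lt i h nu hh s⟩ : Fin (h + i))) := by
    rw [Fintype.bijective_iff_injective_and_card]
    refine ⟨fun a b hab => wnu_inj i h nu hn hh (by simpa using hab), by simp [add_comm]⟩
  refine ⟨(Equiv.ofBijective _ b2).trans (Equiv.ofBijective _ b1).symm, fun s => ?_⟩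
  have := (Equiv.ofBijective _ b1).apply_symm_apply ((Equiv.ofBijective _ b2) s)
  have := congrArg Fin.val this
  exact this.symm

lemma Del_pos {n : ℕ} (t : Fin n → ℤ) (ht : StrictAnti t) : 0 < Del t := by
  apply Finset.prod_pos
  intro q hq
  have : q.1 < q.2 := by simpa using hq
  have := ht this
  linarith

lemma sign_perm (i h : ℕ) (nu : Fin i → ℕ) (hn : Antitone nu) (hh : ∀ k, nu k ≤ h)
    (σ : Equiv.Perm (Fin i ⊕ Fin h)) (hσ : ∀ s, wnu i h nu s = w0 i h (σ s)) :
    ((Equiv.Perm.sign σ : ℤˣ) : ℤ) = (-1) ^ (∑ m : Fin h, complConj i h (ext0 nu) m) := by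
  have A := det_sum_Del (fun s => ((wnu i h nu s : ℕ) : ℤ))
  have B := det_sum_Del (fun s => ((w0 i h s : ℕ) : ℤ))
  have AB : (Matrix.of fun r s : Fin i ⊕ Fin h => ((wnu i h nu r : ℕ) : ℤ) ^ (w0 i h s)).det
      = Equiv.Perm.sign σ * (Matrix.of fun r s : Fin i ⊕ Fin h => ((w0 i h r : ℕ) : ℤ) ^ (w0 i h s)).det := by
    refine Eq.trans ?_ (Matrix.det_permute σ _)
    congr 1
    ext r s
    simp [hσ]
  have Bpos : 0 < (Matrix.of fun r s : Fin i ⊕ Fin h => ((w0 i h r : ℕ) : ℤ) ^ (w0 i h s)).det := by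
    refine lt_of_lt_of_eq ?_ B.symm
    refine mul_pos (mul_pos (Del_pos _ ?_) (Del_pos _ ?_)) ?_
    · intro a b hab
      have : (a : ℕ) < b := hab
      simp only [w0, Sum.elim_inl]
      omega
    · intro a b hab
      have : (a : ℕ) < b := hab
      simp only [w0, Sum.elim_inr]
      omega
    · refine Finset.prod_pos fun k _ => Finset.prod_pos fun m _ => ?_
      simp only [w0, Sum.elim_inr, Sum.elim_inl]
      omega
  have C : 0 < (-1) ^ (∑ m : Fin h, complConj i h (ext0 nu) m) *
      ∏ k : Fin i, ∏ m : Fin h, (((wnu i h nu (Sum.inl k) : ℕ) : ℤ) - ((wnu i h nu (Sum.inr m) : ℕ) : ℤ)) := by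
    rw [Finset.prod_comm, ← Finset.prod_pow_eq_pow_sum, ← Finset.prod_mul_distrib]
    refine Finset.prod_pos fun m _ => ?_
    have e : ((-1 : ℤ)) ^ (complConj i h (ext0 nu) m) = ∏ k : Fin i, if ¬ (h - 1 - (m : ℕ) < nu k) then (-1 : ℤ) else 1 := by
      rw [← Finset.prod_filter, Finset.prod_const]
      congr 1
      rw [complConj, if_pos m.2, conjP_ext0]
      have := Finset.card_filter_add_card_filter_not (s := (Finset.univ : Finset (Fin i))) (fun k => h - 1 - (m : ℕ) < nu k)
      rw [Finset.card_univ, Fintype.card_fin] at this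
      omega
    rw [e, ← Finset.prod_mul_distrib]
    refine Finset.prod_pos fun k _ => ?_
    have := wnu_cmp i h nu hn hh k m
    split_ifs with hc
    · have := this.1 hc
      omega
    · have := this.2 hc
      omega
  have Dp : 0 < Del (fun k => ((wnu i h nu (Sum.inl k) : ℕ) : ℤ)) * Del (fun k => ((wnu i h nu (Sum.inr k) : ℕ) : ℤ)) := by
    refine mul_pos (Del_pos _ ?_) (Del_pos _ ?_)
    · intro a b hab
      have := hn hab.le
      have : (a : ℕ) < b := hab
      simp only [wnu, Sum.elim_inl]
      omega
    · intro a b hab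
      have : (a : ℕ) < b := hab
      have := complConj_antitone i h nu this.le
      simp only [wnu, Sum.elim_inr]
      omega
  have E := mul_pos Dp C
  have A' := A.symm.trans AB
  set P := ∏ k : Fin i, ∏ m : Fin h, (((wnu i h nu (Sum.inl k) : ℕ) : ℤ) - ((wnu i h nu (Sum.inr m) : ℕ) : ℤ)) with hP
  set BB := (Matrix.of fun r s : Fin i ⊕ Fin h => ((w0 i h r : ℕ) : ℤ) ^ (w0 i h s)).det with hBB
  set DD := Del (fun k => ((wnu i h nu (Sum.inl k) : ℕ) : ℤ)) * Del (fun k => ((wnu i h nu (Sum.inr k) : ℕ) : ℤ)) with hDD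
  rcases Int.units_eq_one_or (Equiv.Perm.sign σ) with hs | hs <;>
  rcases neg_one_pow_eq_or ℤ (∑ m : Fin h, complConj i h (ext0 nu) m) with h1 | h1 <;>
  rw [hs] at A' ⊢ <;> rw [h1] at E ⊢ <;> push_cast at A' ⊢ <;> nlinarith

lemma block_update {R : Type*} {i h N : ℕ} (Y : Fin h → Fin N → R)
    (e : Fin i ⊕ Fin h → Fin N) (v : Fin i → Fin N → R) (a : Fin i) (x : Fin N → R) :
    (Matrix.of fun r s : Fin i ⊕ Fin h => Sum.elim (Function.update v a x) Y r (e s))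
      = (Matrix.of fun r s : Fin i ⊕ Fin h => Sum.elim v Y r (e s)).updateRow (Sum.inl a) (fun s => x (e s)) := by
  ext r s
  rw [Matrix.updateRow_apply, Matrix.of_apply, Matrix.of_apply, Sum.elim_update_left]
  by_cases hr : r = Sum.inl a
  · rw [if_pos hr, hr, Function.update_self]
  · rw [if_neg hr, Function.update_of_ne hr]

/-- determinant in the first block of rows, as an alternating map -/
noncomputable def blockAlt {R : Type*} [CommRing R] {i h N : ℕ} (Y : Fin h → Fin N → R)
    (e : Fin i ⊕ Fin h → Fin N) : (Fin N → R) [⋀^Fin i]→ₗ[R] R where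
  toFun v := (Matrix.of fun r s : Fin i ⊕ Fin h => Sum.elim v Y r (e s)).det
  map_update_add' := by
    intro inst v a x y
    obtain rfl : inst = instDecidableEqFin i := Subsingleton.elim _ _
    rw [block_update, block_update, block_update, ← Matrix.det_updateRow_add]
    rfl
  map_update_smul' := by
    intro inst v a c x
    obtain rfl : inst = instDecidableEqFin i := Subsingleton.elim _ _
    rw [block_update, block_update, smul_eq_mul, ← Matrix.det_updateRow_smul]
    rfl
  map_eq_zero_of_eq' := by
    intro v a b hab hne
    refine Matrix.det_zero_of_row_eq (i := Sum.inl a) (j := Sum.inl b) (by simpa using hne) ?_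
    funext s
    simp [hab]

lemma det_neg_pow {R : Type*} [CommRing R] {n : ℕ} (y : Fin n → R) (p : Fin n → ℕ) :
    (Matrix.of fun a b : Fin n => (- y a) ^ p b).det
      = (-1) ^ (∑ b, p b) * (Matrix.of fun a b : Fin n => y a ^ p b).det := by
  rw [← Finset.prod_pow_eq_pow_sum, ← Matrix.det_mul_row]
  congr 1
  ext a b
  simp only [Matrix.of_apply]
  rw [neg_pow]

def dl (n : ℕ) : ℕ := ∑ b : Fin n, (n - 1 - (b : ℕ))

lemma Del_neg {R : Type*} [CommRing R] {n : ℕ} (y : Fin n → R) :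
    Del (fun a => - y a) = (-1) ^ dl n * Del y := by
  rw [← det_Del, ← det_Del, det_neg_pow, dl]

lemma blockAlt_single {R : Type*} [CommRing R] {i h : ℕ} (y : Fin h → R) (nu : Fin i → ℕ)
    (hn : Antitone nu) (hh : ∀ k, nu k ≤ h) :
    (Matrix.of fun r s : Fin i ⊕ Fin h =>
      Sum.elim (fun (b : Fin i) (j : Fin (h + i)) => if (j : ℕ) = nu b + (i - 1 - (b : ℕ)) then (1 : R) else 0)
        (fun m j => (- y m) ^ (j : ℕ)) r ⟨w0 i h s, w0_lt i h s⟩).det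
    = (-1) ^ dl h * (Matrix.of fun a b : Fin h => y a ^ (complConj i h (ext0 nu) b + (h - 1 - (b : ℕ)))).det := by
  obtain ⟨σ, hσ⟩ := exists_perm i h nu hn hh
  have hs := sign_perm i h nu hn hh σ hσ
  set M := (Matrix.of fun r s : Fin i ⊕ Fin h =>
      Sum.elim (fun (b : Fin i) (j : Fin (h + i)) => if (j : ℕ) = nu b + (i - 1 - (b : ℕ)) then (1 : R) else 0)
        (fun m j => (- y m) ^ (j : ℕ)) r ⟨w0 i h s, w0_lt i h s⟩) with hM
  have h1 := Matrix.det_permute' σ M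
  have h2 : (M.submatrix id σ) = Matrix.fromBlocks 1 0
      (Matrix.of fun (m : Fin h) (b : Fin i) => (- y m) ^ (nu b + (i - 1 - (b : ℕ))))
      (Matrix.of fun a b : Fin h => (- y a) ^ (complConj i h (ext0 nu) b + (h - 1 - (b : ℕ)))) := by
    ext r s
    have hinj := wnu_inj i h nu hn hh
    simp only [hM, Matrix.submatrix_apply, Matrix.of_apply, id, ← hσ]
    rcases r with r | r <;> rcases s with s | s
    · rw [Matrix.fromBlocks_apply₁₁, Matrix.one_apply]
      simp only [Sum.elim_inl]
      refine if_congr ?_ rfl rfl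
      constructor
      · intro hh
        have := @hinj (Sum.inl s) (Sum.inl r) hh
        exact (Sum.inl_injective this).symm
      · rintro rfl
        rfl
    · rw [Matrix.fromBlocks_apply₁₂, Matrix.zero_apply]
      simp only [Sum.elim_inl]
      rw [if_neg]
      intro hh
      have := @hinj (Sum.inr s) (Sum.inl r) hh
      simp at this
    · rfl
    · rfl
  rw [h2, Matrix.det_fromBlocks_zero₁₂, Matrix.det_one, one_mul, det_neg_pow, Finset.sum_add_distrib, pow_add] at h1
  have hs' : (((Equiv.Perm.sign σ : ℤˣ) : ℤ) : R) = (-1) ^ (∑ m : Fin h, complConj i h (ext0 nu) m) := by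
    rw [hs]; push_cast; rfl
  rw [hs'] at h1
  have hu : IsUnit ((-1 : R) ^ (∑ m : Fin h, complConj i h (ext0 nu) m)) :=
    (isUnit_one.neg).pow _
  apply hu.mul_left_cancel
  rw [← h1, dl]
  ring

lemma dual_cauchy {R : Type*} [CommRing R] (i h : ℕ) (z : Fin i → R) (y : Fin h → R) :
    Del z * Del y * ∏ k : Fin i, ∏ m : Fin h, (z k + y m)
    = ∑ nu ∈ (Fintype.piFinset (fun _ : Fin i => Finset.range (h + 1))).filter (fun nu => Antitone nu),
       (Matrix.of fun a b : Fin i => z a ^ (nu b + (i - 1 - (b : ℕ)))).det *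
       (Matrix.of fun a b : Fin h => y a ^ (complConj i h (ext0 nu) b + (h - 1 - (b : ℕ)))).det := by
  have h1 := det_sum_Del (Sum.elim z (fun m => - y m))
  have h2 := alt_expand (blockAlt (fun m (j : Fin (h + i)) => (- y m) ^ (j : ℕ))
    (fun s => ⟨w0 i h s, w0_lt i h s⟩)) (fun a j => z a ^ (j : ℕ))
  have h3 : (blockAlt (fun m (j : Fin (h + i)) => (- y m) ^ (j : ℕ))
    (fun s => ⟨w0 i h s, w0_lt i h s⟩)) (fun a j => z a ^ (j : ℕ))
     = (Matrix.of fun r s : Fin i ⊕ Fin h =>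
      (Sum.elim z (fun m => - y m)) r ^ (Sum.elim (fun k : Fin i => h + (i - 1 - (k : ℕ))) (fun m : Fin h => h - 1 - (m : ℕ)) s)).det := by
    change Matrix.det _ = _
    congr 1
    ext r s
    rcases r with r | r <;> rfl
  rw [h3, h1] at h2
  simp only [Sum.elim_inl, Sum.elim_inr, sub_neg_eq_add] at h2
  have h4 := strictAnti_reparam i h (fun c : Fin i → ℕ => (Matrix.of fun a b : Fin i => z a ^ (c b)).det *
    (blockAlt (fun m (j : Fin (h + i)) => (- y m) ^ (j : ℕ))
    (fun s => ⟨w0 i h s, w0_lt i h s⟩)) (fun b (j : Fin (h + i)) => if (j : ℕ) = c b then (1 : R) else 0))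
  have h5 : ∀ c : Fin i → Fin (h + i), (fun b => (Pi.single (c b) 1 : Fin (h + i) → R)) =
      (fun b (j : Fin (h + i)) => if (j : ℕ) = c b then (1 : R) else 0) := by
    intro c
    funext b j
    rw [Pi.single_apply]
    exact if_congr Fin.ext_iff rfl rfl
  simp only [h5] at h2
  rw [h4] at h2
  rw [Del_neg] at h2
  have hu : IsUnit ((-1 : R) ^ dl h) := (isUnit_one.neg).pow _
  apply hu.mul_left_cancel
  rw [show (-1 : R) ^ dl h * (Del z * Del y * ∏ k : Fin i, ∏ m : Fin h, (z k + y m)) = 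
    Del z * ((-1) ^ dl h * Del y) * ∏ k : Fin i, ∏ m : Fin h, (z k + y m) by ring, Finset.mul_sum]
  refine h2.trans (Finset.sum_congr rfl fun nu hnu => ?_)
  simp only [Finset.mem_filter, Fintype.mem_piFinset, Finset.mem_range] at hnu
  have := blockAlt_single y nu hnu.2 (fun k => Nat.lt_succ_iff.1 (hnu.1 k))
  change _ * Matrix.det _ = _
  rw [this]
  ring

lemma cauchy_binet' {R : Type*} [CommRing R] (i M : ℕ) (v : Fin i → ℕ → R) (A : ℕ → Fin i → R) :
    (Matrix.of fun a b : Fin i => ∑ j ∈ Finset.range (M + i), v a j * A j b).det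
    = ∑ mu ∈ (Fintype.piFinset (fun _ : Fin i => Finset.range (M + 1))).filter (fun mu => Antitone mu),
       (Matrix.of fun a b : Fin i => v a (mu b + (i - 1 - (b : ℕ)))).det *
       (Matrix.of fun a b : Fin i => A (mu a + (i - 1 - (a : ℕ))) b).det := by
  let A' : Matrix (Fin (M + i)) (Fin i) R := Matrix.of fun j b => A j b
  let f : (Fin (M + i) → R) [⋀^Fin i]→ₗ[R] R :=
    (Matrix.detRowAlternating (R := R) (n := Fin i)).compLinearMap (Matrix.vecMulLinear A')
  have hf : ∀ w : Fin i → Fin (M + i) → R, f w = (Matrix.of fun a b : Fin i => ∑ j, w a j * A (j : ℕ) b).det := by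
    intro w
    rfl
  have h2 := alt_expand f (fun a j => v a j)
  rw [hf] at h2
  have e : ∀ a b : Fin i, ∑ j : Fin (M + i), v a j * A j b = ∑ j ∈ Finset.range (M + i), v a j * A j b :=
    fun a b => Fin.sum_univ_eq_sum_range (fun j => v a j * A j b) (M + i)
  simp only [e] at h2
  rw [h2]
  rw [← strictAnti_reparam i M (fun c : Fin i → ℕ => (Matrix.of fun a b : Fin i => v a (c b)).det *
    (Matrix.of fun a b : Fin i => A (c a) b).det)]
  refine Finset.sum_congr rfl fun c _ => ?_
  rw [hf]
  congr 2
  ext a b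
  simp [Pi.single_apply]

def Cc (D m j : ℕ) : ℤ := ∑ r ∈ Finset.range (D + 1), if r ≤ j then (m.choose (j - r) : ℤ) else 0

lemma Cc_eq (D m j : ℕ) (hj : j ≤ D) : Cc D m j = Chat m j := by
  rw [Cc, Chat, ← Finset.sum_filter]
  have : (Finset.range (D + 1)).filter (fun r => r ≤ j) = Finset.range (j + 1) := by
    ext r; simp only [Finset.mem_filter, Finset.mem_range]; omega
  rw [this, ← Finset.sum_range_reflect]
  refine Finset.sum_congr rfl fun r hr => ?_
  rw [Finset.mem_range] at hr
  congr 2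
  omega

lemma gen_fun {R : Type*} [CommRing R] (u : R) (D m N : ℕ) (hN : m + D < N) :
    (∑ r ∈ Finset.range (D + 1), u ^ r) * (1 + u) ^ m = ∑ j ∈ Finset.range N, u ^ j * ((Cc D m j : ℤ) : R) := by
  have h1 : ∀ j, u ^ j * ((Cc D m j : ℤ) : R) = ∑ r ∈ Finset.range (D + 1), if r ≤ j then u ^ j * (m.choose (j - r) : R) else 0 := by
    intro j
    rw [Cc, Int.cast_sum, Finset.mul_sum]
    refine Finset.sum_congr rfl fun r _ => ?_
    split_ifs <;> simp
  simp only [h1]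
  rw [Finset.sum_comm, Finset.sum_mul]
  refine Finset.sum_congr rfl fun r hr => ?_
  rw [Finset.mem_range] at hr
  obtain ⟨q, rfl⟩ : ∃ q, N = r + ((m + 1) + q) := ⟨N - r - (m + 1), by omega⟩
  rw [Finset.sum_range_add, Finset.sum_eq_zero, zero_add, Finset.sum_range_add]
  · rw [add_comm 1 u, add_pow, Finset.mul_sum]
    rw [Finset.sum_eq_zero (s := Finset.range q), add_zero]
    · refine Finset.sum_congr rfl fun p _ => ?_
      rw [if_pos (by omega), Nat.add_sub_cancel_left, pow_add]
      ring
    · intro p _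
      rw [if_pos (by omega), Nat.choose_eq_zero_of_lt (by omega)]
      simp
  · intro j hj
    rw [Finset.mem_range] at hj
    rw [if_neg (by omega)]

lemma xside {R : Type*} [CommRing R] (i M D : ℕ) (u : Fin i → R) (m : Fin i → ℕ) (hM : ∀ b, m b + D < M + i) :
    (∏ a, ∑ r ∈ Finset.range (D + 1), u a ^ r) * (Matrix.of fun a b : Fin i => (1 + u a) ^ m b).det
    = ∑ mu ∈ (Fintype.piFinset (fun _ : Fin i => Finset.range (M + 1))).filter (fun mu => Antitone mu),
       (Matrix.of fun a b : Fin i => u a ^ (mu b + (i - 1 - (b : ℕ)))).det *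
       (((Matrix.of fun a b : Fin i => Cc D (m a) (mu b + (i - 1 - (b : ℕ)))).det : ℤ) : R) := by
  rw [← Matrix.det_mul_column]
  have := cauchy_binet' i M (fun a j => u a ^ j) (fun j b => ((Cc D (m b) j : ℤ) : R))
  have e : (Matrix.of fun a b : Fin i => (∑ r ∈ Finset.range (D + 1), u a ^ r) * (Matrix.of fun a b : Fin i => (1 + u a) ^ m b) a b)
     = (Matrix.of fun a b : Fin i => ∑ j ∈ Finset.range (M + i), u a ^ j * ((Cc D (m b) j : ℤ) : R)) := by
    ext a b
    simp only [Matrix.of_apply]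
    exact gen_fun _ _ _ _ (hM b)
  rw [e, this]
  refine Finset.sum_congr rfl fun mu _ => ?_
  congr 1
  rw [← Matrix.det_transpose]
  exact (RingHom.map_det (Int.castRingHom R) _).symm

lemma hom_det {τ : Type*} {n : ℕ} (s : Fin n → τ) (p : Fin n → ℕ) :
    (Matrix.of fun a b : Fin n => (X (s a) : MvPolynomial τ ℤ) ^ p b).det.IsHomogeneous (∑ b, p b) := by
  rw [Matrix.det_apply]
  refine MvPolynomial.IsHomogeneous.sum _ _ _ fun σ _ => ?_
  have h : (∏ b, (X (s (σ b)) : MvPolynomial τ ℤ) ^ p b).IsHomogeneous (∑ b, p b) :=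
    MvPolynomial.IsHomogeneous.prod _ _ _ fun b _ => isHomogeneous_X_pow _ _
  rcases Int.units_eq_one_or (Equiv.Perm.sign σ) with hs | hs
  · rw [hs, one_smul]; exact h
  · rw [hs, Units.neg_smul, one_smul]; exact h.neg

lemma hom_Del {τ : Type*} {n : ℕ} (s : Fin n → τ) :
    (Del (fun a => (X (s a) : MvPolynomial τ ℤ))).IsHomogeneous (dl n) := by
  rw [← det_Del]; exact hom_det s _

lemma Del_ne_zero {τ : Type*} {n : ℕ} (s : Fin n → τ) (hs : Function.Injective s) :
    Del (fun a => (X (s a) : MvPolynomial τ ℤ)) ≠ 0 := by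
  rw [Del, Finset.prod_ne_zero_iff]
  intro q hq h0
  have hq : q.1 < q.2 := by simpa using hq
  exact hq.ne (hs (X_injective (sub_eq_zero.1 h0)))

section
attribute [local instance] MvPolynomial.gradedAlgebra

lemma hc_mul_le {τ : Type*} (P Q : MvPolynomial τ ℤ) (n e : ℕ) (hQ : Q.IsHomogeneous e) :
    homogeneousComponent (n + e) (P * Q) = homogeneousComponent n P * Q := by
  have := DirectSum.coe_decompose_mul_of_right_mem_of_le (homogeneousSubmodule τ ℤ) (a := P) (b := Q) (i := e) (n := n + e)
    hQ (by omega)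
  rw [Nat.add_sub_cancel] at this
  have e1 := decomposition.decompose'_apply (R := ℤ) (P * Q) (n + e)
  have e2 := decomposition.decompose'_apply (R := ℤ) P n
  rw [← e1, ← e2]
  exact this

lemma hc_mul_lt {τ : Type*} (P Q : MvPolynomial τ ℤ) (n e : ℕ) (hQ : Q.IsHomogeneous e) (h : n < e) :
    homogeneousComponent n (P * Q) = 0 := by
  have := DirectSum.coe_decompose_mul_of_right_mem_of_not_le (homogeneousSubmodule τ ℤ) (a := P) (b := Q) (i := e) (n := n)
    hQ (by omega)
  have e1 := decomposition.decompose'_apply (R := ℤ) (P * Q) n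
  rw [← e1]
  exact this
end

lemma trunc (i h d D : ℕ) (hD : d ≤ D) (P : MvPolynomial (Fin i ⊕ Fin h) ℤ) :
    homogeneousComponent d (P * ∑ r ∈ Finset.range (d + 1), (-1) ^ r * hsymX i h r)
    = homogeneousComponent d (P * ∏ k : Fin i, ∑ r ∈ Finset.range (D + 1), (- X (Sum.inl k)) ^ r) := by
  classical
  set F : (Fin i → ℕ) → MvPolynomial (Fin i ⊕ Fin h) ℤ := fun f => ∏ k, (- X (Sum.inl k)) ^ f k with hF
  have hhom : ∀ f : Fin i → ℕ, (F f).IsHomogeneous (∑ k, f k) := by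
    intro f
    refine MvPolynomial.IsHomogeneous.prod _ _ _ fun b _ => ?_
    have := (isHomogeneous_X ℤ (Sum.inl b : Fin i ⊕ Fin h)).neg.pow (f b)
    rwa [one_mul] at this
  have h1 : ∀ r, (-1) ^ r * hsymX i h r = ∑ f ∈ Finset.Nat.antidiagonalTuple i r, F f := by
    intro r
    rw [hsymX, Finset.mul_sum]
    refine Finset.sum_congr rfl fun f hf => ?_
    rw [Finset.Nat.mem_antidiagonalTuple] at hf
    rw [← hf, ← Finset.prod_pow_eq_pow_sum, ← Finset.prod_mul_distrib]
    refine Finset.prod_congr rfl fun k _ => ?_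
    exact (neg_pow _ _).symm
  have h2 : (∏ k : Fin i, ∑ r ∈ Finset.range (D + 1), (- X (Sum.inl k) : MvPolynomial (Fin i ⊕ Fin h) ℤ) ^ r)
      = ∑ f ∈ Fintype.piFinset (fun _ : Fin i => Finset.range (D + 1)), F f := by
    rw [Finset.prod_univ_sum]
  rw [h2]
  simp only [h1, Finset.mul_sum, map_sum]
  symm
  rw [← Finset.sum_filter_of_ne (p := fun f : Fin i → ℕ => ∑ k, f k ≤ d)]
  · rw [← Finset.sum_fiberwise_of_maps_to (t := Finset.range (d + 1)) (g := fun f : Fin i → ℕ => ∑ k, f k)]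
    · refine Finset.sum_congr rfl fun r hr => Finset.sum_congr ?_ fun _ _ => rfl
      rw [Finset.mem_range] at hr
      ext f
      simp only [Finset.mem_filter, Fintype.mem_piFinset, Finset.mem_range, Finset.Nat.mem_antidiagonalTuple]
      constructor
      · exact fun h => h.2
      · intro hf
        refine ⟨⟨fun k => ?_, by omega⟩, hf⟩
        have := Finset.single_le_sum (f := f) (fun _ _ => Nat.zero_le _) (Finset.mem_univ k)
        omega
    · intro f hf
      rw [Finset.mem_filter] at hf
      rw [Finset.mem_range]
      omega
  · intro f _ hne
    by_contra hlt
    exact hne (hc_mul_lt _ _ _ _ (hhom f) (by omega))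

lemma sum_fin_pi {R : Type*} [AddCommMonoid R] (i n : ℕ) (F : (Fin i → ℕ) → R) :
    ∑ f : Fin i → Fin (n + 1), F (fun k => (f k : ℕ))
      = ∑ g ∈ Fintype.piFinset (fun _ : Fin i => Finset.range (n + 1)), F g := by
  refine Finset.sum_bij (fun f _ => fun k => (f k : ℕ)) ?_ ?_ ?_ ?_
  · intro f _
    simp only [Fintype.mem_piFinset, Finset.mem_range]
    exact fun k => (f k).2
  · intro f _ g _ hfg
    funext k
    exact Fin.ext (congrFun hfg k)
  · intro g hg
    simp only [Fintype.mem_piFinset, Finset.mem_range] at hg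
    exact ⟨fun k => ⟨g k, hg k⟩, Finset.mem_univ _, rfl⟩
  · intro f _
    rfl

theorem thom_polynomial_sigma_i1_closed (i h : ℕ) (hi : 1 ≤ i) (hh : 1 ≤ h)
    (Sx : (ℕ → ℕ) → MvPolynomial (Fin i) ℤ)
    (Sy : (ℕ → ℕ) → MvPolynomial (Fin h) ℤ)
    -- bialternant characterization of the Schur polynomials in the x-variables:
    (hSx : ∀ nu : ℕ → ℕ, Antitone nu → (∀ k, i ≤ k → nu k = 0) →
      Sx nu * ∏ q ∈ Finset.univ.filter (fun q : Fin i × Fin i => q.1 < q.2),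
          (X q.1 - X q.2)
        = (Matrix.of fun a b : Fin i =>
            (X a : MvPolynomial (Fin i) ℤ) ^ (nu (b : ℕ) + (i - 1 - (b : ℕ)))).det)
    -- bialternant characterization of the Schur polynomials in the y-variables:
    (hSy : ∀ nu : ℕ → ℕ, Antitone nu → (∀ k, h ≤ k → nu k = 0) →
      Sy nu * ∏ q ∈ Finset.univ.filter (fun q : Fin h × Fin h => q.1 < q.2),
          (X q.1 - X q.2)
        = (Matrix.of fun a b : Fin h =>
            (X a : MvPolynomial (Fin h) ℤ) ^ (nu (b : ℕ) + (h - 1 - (b : ℕ)))).det) :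
    MvPolynomial.homogeneousComponent (i * h - i + 1)
        ((∏ k : Fin i, ∏ l : Fin h,
            (1 + X (Sum.inr l) - X (Sum.inl k) : MvPolynomial (Fin i ⊕ Fin h) ℤ))
          * ∑ r ∈ Finset.range ((i * h - i + 1) + 1), (-1) ^ r * hsymX i h r)
      = ∑ nu : Fin i → Fin (h + 1),
          if (∀ a b : Fin i, a ≤ b → nu b ≤ nu a) then
            ∑ mu : Fin i → Fin (i * h + 1),
              if (∀ a b : Fin i, a ≤ b → mu b ≤ mu a) ∧
                  ((∑ k : Fin i, (nu k : ℕ)) = (∑ k : Fin i, (mu k : ℕ)) + (i - 1)) then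
                C ((-1 : ℤ) ^ (∑ k : Fin i, (mu k : ℕ))
                    * Fdet i (extF (fun k => nu k)) (extF (fun k => mu k)))
                  * rename Sum.inl (Sx (extF (fun k => mu k)))
                  * rename Sum.inr (Sy (complConj i h (extF (fun k => nu k))))
              else 0
          else 0 := by
  classical
  have hxinj : Function.Injective (Sum.inl : Fin i → Fin i ⊕ Fin h) := Sum.inl_injective
  have hyinj : Function.Injective (Sum.inr : Fin h → Fin i ⊕ Fin h) := Sum.inr_injective
  set Dx : MvPolynomial (Fin i ⊕ Fin h) ℤ := Del (fun a : Fin i => X (Sum.inl a)) with hDx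
  set Dy : MvPolynomial (Fin i ⊕ Fin h) ℤ := Del (fun a : Fin h => X (Sum.inr a)) with hDy
  have hDx0 : Dx ≠ 0 := Del_ne_zero _ hxinj
  have hDy0 : Dy ≠ 0 := Del_ne_zero _ hyinj
  set DX : (Fin i → ℕ) → MvPolynomial (Fin i ⊕ Fin h) ℤ := fun mu =>
    (Matrix.of fun a b : Fin i => (X (Sum.inl a) : MvPolynomial (Fin i ⊕ Fin h) ℤ) ^ (mu b + (i - 1 - (b : ℕ)))).det with hDX
  set DY : (Fin i → ℕ) → MvPolynomial (Fin i ⊕ Fin h) ℤ := fun nu =>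
    (Matrix.of fun a b : Fin h => (X (Sum.inr a) : MvPolynomial (Fin i ⊕ Fin h) ℤ) ^
      (complConj i h (ext0 nu) b + (h - 1 - (b : ℕ)))).det with hDY
  have hSX : ∀ mu : Fin i → ℕ, Antitone mu → rename Sum.inl (Sx (ext0 mu)) * Dx = DX mu := by
    intro mu hmu
    have := congrArg (rename (Sum.inl : Fin i → Fin i ⊕ Fin h)) (hSx (ext0 mu) (ext0_antitone mu hmu) (ext0_zero mu))
    rw [map_mul, map_prod, AlgHom.map_det] at this
    simp only [map_sub, rename_X] at this
    refine this.trans ?_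
    congr 1
    ext1 a b
    simp [ext0_coe]
  have hSY : ∀ nu : Fin i → ℕ, rename Sum.inr (Sy (complConj i h (ext0 nu))) * Dy = DY nu := by
    intro nu
    have := congrArg (rename (Sum.inr : Fin h → Fin i ⊕ Fin h)) (hSy _ (complConj_antitone i h nu)
      (complConj_zero i h (ext0 nu)))
    rw [map_mul, map_prod, AlgHom.map_det] at this
    simp only [map_sub, rename_X] at this
    refine this.trans ?_
    congr 1
    ext1 a b
    simp
  obtain ⟨D, hD⟩ : ∃ D, D = i * h + i := ⟨_, rfl⟩
  obtain ⟨M, hM⟩ : ∃ M, M = D + h := ⟨_, rfl⟩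
  have hih : i ≤ i * h := Nat.le_mul_of_pos_right i hh
  obtain ⟨d, hd⟩ : ∃ d, d = i * h - i + 1 := ⟨_, rfl⟩
  rw [← hd]
  apply mul_right_cancel₀ (mul_ne_zero hDx0 hDy0)
  rw [trunc i h d D (by omega)]
  rw [← hc_mul_le _ _ d (dl i + dl h) ((hom_Del _).mul (hom_Del _))]
  -- the exact expansion
  have hexp : ((∏ k : Fin i, ∏ l : Fin h,
            (1 + X (Sum.inr l) - X (Sum.inl k) : MvPolynomial (Fin i ⊕ Fin h) ℤ))
          * ∏ k : Fin i, ∑ r ∈ Finset.range (D + 1), (- X (Sum.inl k)) ^ r) * (Dx * Dy)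
      = ∑ nu ∈ (Fintype.piFinset (fun _ : Fin i => Finset.range (h + 1))).filter (fun nu => Antitone nu),
        ∑ mu ∈ (Fintype.piFinset (fun _ : Fin i => Finset.range (M + 1))).filter (fun mu => Antitone mu),
          C ((-1 : ℤ) ^ (∑ k, mu k) * (Matrix.of fun a b : Fin i =>
            Cc D (nu a + (i - 1 - (a : ℕ))) (mu b + (i - 1 - (b : ℕ)))).det) * (DX mu * DY nu) := by
    have h1 := dual_cauchy i h (fun k => (1 + (- X (Sum.inl k)) : MvPolynomial (Fin i ⊕ Fin h) ℤ)) (fun l => X (Sum.inr l))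
    have h2 : Del (fun k : Fin i => (1 + (- X (Sum.inl k)) : MvPolynomial (Fin i ⊕ Fin h) ℤ)) = (-1) ^ dl i * Dx := by
      rw [hDx, ← Del_neg]
      unfold Del
      refine Finset.prod_congr rfl fun q _ => ?_
      ring
    have h3 : (∏ k : Fin i, ∏ l : Fin h,
            (1 + X (Sum.inr l) - X (Sum.inl k) : MvPolynomial (Fin i ⊕ Fin h) ℤ)) =
        ∏ k : Fin i, ∏ l : Fin h, ((1 + (- X (Sum.inl k))) + X (Sum.inr l)) :=
      Finset.prod_congr rfl fun _ _ => Finset.prod_congr rfl fun _ _ => by ring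
    rw [h3]
    set P := ∏ k : Fin i, ∏ l : Fin h, ((1 + (- X (Sum.inl k))) + X (Sum.inr l) : MvPolynomial (Fin i ⊕ Fin h) ℤ)
    set G := ∏ k : Fin i, ∑ r ∈ Finset.range (D + 1), (- X (Sum.inl k) : MvPolynomial (Fin i ⊕ Fin h) ℤ) ^ r with hG
    rw [h2, ← hDy] at h1
    have hsq : ((-1 : MvPolynomial (Fin i ⊕ Fin h) ℤ) ^ dl i) * (-1) ^ dl i = 1 := by
      rw [← mul_pow]; simp
    calc P * G * (Dx * Dy) = ((-1) ^ dl i * (-1) ^ dl i) * (P * G * (Dx * Dy)) := by rw [hsq, one_mul]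
      _ = (-1) ^ dl i * G * ((-1) ^ dl i * Dx * Dy * P) := by ring
      _ = _ := by
        rw [h1, Finset.mul_sum]
        refine Finset.sum_congr rfl fun nu hnu => ?_
        simp only [Finset.mem_filter, Fintype.mem_piFinset, Finset.mem_range] at hnu
        have h4 := xside i M D (fun k => (- X (Sum.inl k) : MvPolynomial (Fin i ⊕ Fin h) ℤ))
          (fun b => nu b + (i - 1 - (b : ℕ))) (by
            intro b
            have := hnu.1 b
            have := b.2
            omega)
        rw [← hG] at h4
        rw [show ∀ A B : MvPolynomial (Fin i ⊕ Fin h) ℤ, (-1) ^ dl i * G * (A * B) = (-1) ^ dl i * (G * A) * B by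
          intros; ring, h4, Finset.mul_sum, Finset.sum_mul]
        refine Finset.sum_congr rfl fun mu _ => ?_
        rw [det_neg_pow, Finset.sum_add_distrib, pow_add]
        change (-1) ^ dl i * ((-1) ^ (∑ b, mu b) * (-1) ^ dl i * DX mu * _) * DY nu = _
        rw [map_mul, map_pow, map_neg, map_one, ← eq_intCast (C : ℤ →+* MvPolynomial (Fin i ⊕ Fin h) ℤ)]
        linear_combination ((-1) ^ (∑ b, mu b) * DX mu * DY nu * C (Matrix.of fun a b : Fin i =>
            Cc D (nu a + (i - 1 - (a : ℕ))) (mu b + (i - 1 - (b : ℕ)))).det) * hsq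
  rw [hexp]
  simp only [map_sum]
  -- right-hand side
  have hR : (∑ nu : Fin i → Fin (h + 1),
          if (∀ a b : Fin i, a ≤ b → nu b ≤ nu a) then
            ∑ mu : Fin i → Fin (i * h + 1),
              if (∀ a b : Fin i, a ≤ b → mu b ≤ mu a) ∧
                  ((∑ k : Fin i, (nu k : ℕ)) = (∑ k : Fin i, (mu k : ℕ)) + (i - 1)) then
                C ((-1 : ℤ) ^ (∑ k : Fin i, (mu k : ℕ))
                    * Fdet i (extF (fun k => nu k)) (extF (fun k => mu k)))
                  * rename Sum.inl (Sx (extF (fun k => mu k)))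
                  * rename Sum.inr (Sy (complConj i h (extF (fun k => nu k))))
              else 0
          else 0 : MvPolynomial (Fin i ⊕ Fin h) ℤ)
      = ∑ nu ∈ (Fintype.piFinset (fun _ : Fin i => Finset.range (h + 1))).filter (fun nu => Antitone nu),
        ∑ mu ∈ Fintype.piFinset (fun _ : Fin i => Finset.range (i * h + 1)),
          if Antitone mu ∧ ∑ k, nu k = ∑ k, mu k + (i - 1) then
            C ((-1 : ℤ) ^ (∑ k, mu k) * Fdet i (ext0 nu) (ext0 mu))
                  * rename Sum.inl (Sx (ext0 mu)) * rename Sum.inr (Sy (complConj i h (ext0 nu)))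
          else 0 := by
    rw [Finset.sum_filter, ← sum_fin_pi]
    refine Finset.sum_congr rfl fun nu _ => ?_
    refine if_congr ⟨fun H a b hab => H a b hab, fun H a b hab => H hab⟩ ?_ rfl
    rw [← sum_fin_pi]
    refine Finset.sum_congr rfl fun mu _ => ?_
    refine if_congr (and_congr ⟨fun H a b hab => H a b hab, fun H a b hab => H hab⟩ Iff.rfl) ?_ rfl
    rfl
  rw [hR, Finset.sum_mul]
  refine Finset.sum_congr rfl fun nu hnu => ?_
  simp only [Finset.mem_filter, Fintype.mem_piFinset, Finset.mem_range] at hnu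
  have hsum := sum_complConj i h nu (fun k => Nat.lt_succ_iff.1 (hnu.1 k))
  have hterm : ∀ (mu : Fin i → ℕ) (c : ℤ), homogeneousComponent (d + (dl i + dl h)) (C c * (DX mu * DY nu))
      = if ∑ k, nu k = ∑ k, mu k + (i - 1) then C c * (DX mu * DY nu) else 0 := by
    intro mu c
    have hh1 : (C c * (DX mu * DY nu)).IsHomogeneous ((∑ k, mu k + dl i) + (∑ m : Fin h, complConj i h (ext0 nu) m + dl h)) := by
      refine MvPolynomial.IsHomogeneous.C_mul ?_ c
      refine MvPolynomial.IsHomogeneous.mul ?_ ?_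
      · have := hom_det (Sum.inl : Fin i → Fin i ⊕ Fin h) (fun b => mu b + (i - 1 - (b : ℕ)))
        rwa [Finset.sum_add_distrib] at this
      · have := hom_det (Sum.inr : Fin h → Fin i ⊕ Fin h) (fun b => complConj i h (ext0 nu) b + (h - 1 - (b : ℕ)))
        rwa [Finset.sum_add_distrib] at this
    rw [homogeneousComponent_of_mem hh1]
    refine if_congr ?_ rfl rfl
    omega
  simp only [hterm]
  rw [← Finset.sum_filter, Finset.filter_filter, ← Finset.sum_filter]
  have hset : (Fintype.piFinset (fun _ : Fin i => Finset.range (M + 1))).filter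
        (fun mu => Antitone mu ∧ ∑ k, nu k = ∑ k, mu k + (i - 1))
      = (Fintype.piFinset (fun _ : Fin i => Finset.range (i * h + 1))).filter
        (fun mu => Antitone mu ∧ ∑ k, nu k = ∑ k, mu k + (i - 1)) := by
    ext mu
    simp only [Finset.mem_filter, Fintype.mem_piFinset, Finset.mem_range]
    refine and_congr_left fun hc => ?_
    constructor
    · intro _ k
      have := Finset.single_le_sum (f := mu) (fun _ _ => Nat.zero_le _) (Finset.mem_univ k)
      omega
    · intro H k
      have := H k
      omega
  rw [hset, Finset.sum_mul]
  refine Finset.sum_congr rfl fun mu hmu => ?_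
  simp only [Finset.mem_filter, Fintype.mem_piFinset, Finset.mem_range] at hmu
  rw [← hSX mu hmu.2.1, ← hSY nu]
  have hF : (Matrix.of fun a b : Fin i =>
            Cc D (nu a + (i - 1 - (a : ℕ))) (mu b + (i - 1 - (b : ℕ)))).det = Fdet i (ext0 nu) (ext0 mu) := by
    unfold Fdet
    congr 1
    ext a b
    simp only [Matrix.of_apply, ext0_coe]
    have := hmu.1 b
    exact Cc_eq _ _ _ (by omega)
  rw [hF]
  ring
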